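/- arXiv:2203.10329 — 3 statements merged into one kernel-verified Lean document; each statement's English description precedes it below -/
import Mathlib

section
/- Let f : ℝ^d → ℝ be L-smooth, let μ > 0, and let f_μ(x) = E_u[f(x + μ u)] be its Gaussian smoothing. Then f_μ is differentiable and L-smooth, i.e., ‖∇f_μ(x) − ∇f_μ(y)‖ ≤ L‖x − y‖ for all x, y ∈ ℝ^d. -/
open MeasureTheory ProbabilityTheory

/-- The standard multivariate Gaussian distribution `N(0, I_d)` on `ℝ^d`. -/
noncomputable def stdGaussian (d : ℕ) : Measure (EuclideanSpace ℝ (Fin d)) :=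
  (Measure.pi fun _ : Fin d => gaussianReal 0 1).map
    (MeasurableEquiv.toLp 2 (Fin d → ℝ))

/-!
Averaging the first-order Taylor estimate `‖f y - f x - f' x (y - x)‖ ≤ L ‖y - x‖ ^ 2` over random
translations shows that smoothing commutes with differentiation, and an average of translates of
`f'` has at most the Lipschitz constant of `f'`. The averages exist because `f` grows at most
quadratically and a Gaussian vector has a finite second moment.
-/

open Asymptotics Topology
open scoped NNReal

section LipschitzDerivative

variable {E F : Type*} [NormedAddCommGroup E] [NormedSpace ℝ E]
  [NormedAddCommGroup F] [NormedSpace ℝ F] {f : E → F} {K : ℝ≥0}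

lemma norm_sub_sub_fderiv_le_of_lipschitzWith_fderiv (hf : Differentiable ℝ f)
    (hf' : LipschitzWith K (fderiv ℝ f)) (x y : E) :
    ‖f y - f x - fderiv ℝ f x (y - x)‖ ≤ K * ‖y - x‖ ^ 2 := by
  have hbound : ∀ z ∈ Metric.closedBall x ‖y - x‖,
      ‖fderiv ℝ f z - fderiv ℝ f x‖ ≤ K * ‖y - x‖ := fun z hz =>
    (hf'.norm_sub_le z x).trans (by gcongr; exact mem_closedBall_iff_norm.1 hz)
  have htaylor : ‖f y - f x - fderiv ℝ f x (y - x)‖ ≤ K * ‖y - x‖ * ‖y - x‖ :=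
    (convex_closedBall x ‖y - x‖).norm_image_sub_le_of_norm_fderiv_le' (fun z _ => hf z) hbound
      (Metric.mem_closedBall_self (norm_nonneg _)) (mem_closedBall_iff_norm.2 le_rfl)
  rwa [mul_assoc, ← sq] at htaylor

end LipschitzDerivative

section Integrability

variable {Ω E F : Type*} [MeasurableSpace Ω] {P : Measure Ω} [IsFiniteMeasure P]
  [NormedAddCommGroup E] [NormedAddCommGroup F] {Y : Ω → E} {K : ℝ≥0}

lemma integrable_comp_of_lipschitzWith {g : E → F} (hg : LipschitzWith K g)
    (hY : Integrable Y P) : Integrable (fun ω => g (Y ω)) P := by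
  have hincr : Integrable (fun ω => g (Y ω) - g 0) P :=
    (hY.norm.const_mul K).mono'
      ((hg.continuous.comp_aestronglyMeasurable hY.1).sub aestronglyMeasurable_const)
      (.of_forall fun ω => by simpa using hg.norm_sub_le (Y ω) 0)
  simpa using hincr.fun_add (integrable_const (g 0))

variable [NormedSpace ℝ E] [NormedSpace ℝ F] {f : E → F}

lemma integrable_comp_of_lipschitzWith_fderiv (hf : Differentiable ℝ f)
    (hf' : LipschitzWith K (fderiv ℝ f)) (hY : MemLp Y 2 P) :
    Integrable (fun ω => f (Y ω)) P := by
  have hlin : Integrable (fun ω => fderiv ℝ f 0 (Y ω)) P :=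
    (fderiv ℝ f 0).integrable_comp (hY.integrable one_le_two)
  have hrem : Integrable (fun ω => f (Y ω) - f 0 - fderiv ℝ f 0 (Y ω)) P :=
    ((hY.integrable_norm_pow two_ne_zero).const_mul (K : ℝ)).mono'
      (((hf.continuous.comp_aestronglyMeasurable hY.1).sub aestronglyMeasurable_const).sub hlin.1)
      (.of_forall fun ω => by
        simpa using norm_sub_sub_fderiv_le_of_lipschitzWith_fderiv hf hf' 0 (Y ω))
  simpa using (hrem.fun_add hlin).fun_add (integrable_const (f 0))

end Integrability

/-- The randomized smoothing `x ↦ 𝔼[f (x + X)]` of a function `f` by a random vector `X`. Gaussian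
smoothing with parameter `μ` is the case `X = μ • u` with `u` standard Gaussian. -/
noncomputable def randomizedSmoothing {Ω E F : Type*} [MeasurableSpace Ω] [Add E]
    [NormedAddCommGroup F] [NormedSpace ℝ F] (f : E → F) (X : Ω → E) (P : Measure Ω) (x : E) : F :=
  ∫ ω, f (x + X ω) ∂P

section RandomizedSmoothing

variable {Ω E F : Type*} [MeasurableSpace Ω] {P : Measure Ω} [IsProbabilityMeasure P]
  [NormedAddCommGroup F] [NormedSpace ℝ F]

lemma norm_randomizedSmoothing_sub_le [Add E] {g : E → F} {X : Ω → E} {x y : E} {C : ℝ}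
    (hx : Integrable (fun ω => g (x + X ω)) P) (hy : Integrable (fun ω => g (y + X ω)) P)
    (hC : ∀ u, ‖g (x + u) - g (y + u)‖ ≤ C) :
    ‖randomizedSmoothing g X P x - randomizedSmoothing g X P y‖ ≤ C := by
  rw [randomizedSmoothing, randomizedSmoothing, ← integral_sub hx hy]
  simpa using norm_integral_le_of_norm_le_const (μ := P) (.of_forall fun ω => hC (X ω))

variable [NormedAddCommGroup E] [NormedSpace ℝ E] {f : E → F} {X : Ω → E} {K : ℝ≥0}

lemma norm_randomizedSmoothing_sub_sub_fderiv_le (hf : Differentiable ℝ f)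
    (hf' : LipschitzWith K (fderiv ℝ f)) (hX : MemLp X 2 P) (x y : E) :
    ‖randomizedSmoothing f X P y - randomizedSmoothing f X P x
      - randomizedSmoothing (fderiv ℝ f) X P x (y - x)‖ ≤ K * ‖y - x‖ ^ 2 := by
  have htrans (z : E) : MemLp (fun ω => z + X ω) 2 P := (memLp_const z).add hX
  have hint (z : E) : Integrable (fun ω => f (z + X ω)) P :=
    integrable_comp_of_lipschitzWith_fderiv hf hf' (htrans z)
  have hint' : Integrable (fun ω => fderiv ℝ f (x + X ω)) P :=
    integrable_comp_of_lipschitzWith hf' ((htrans x).integrable one_le_two)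
  have hincr : Integrable (fun ω => f (y + X ω) - f (x + X ω)) P := (hint y).sub (hint x)
  simp only [randomizedSmoothing]
  rw [ContinuousLinearMap.integral_apply hint', ← integral_sub (hint y) (hint x),
    ← integral_sub hincr (hint'.apply_continuousLinearMap _)]
  have htaylor (ω : Ω) : ‖f (y + X ω) - f (x + X ω) - fderiv ℝ f (x + X ω) (y - x)‖
      ≤ K * ‖y - x‖ ^ 2 := by
    simpa using norm_sub_sub_fderiv_le_of_lipschitzWith_fderiv hf hf' (x + X ω) (y + X ω)
  simpa using norm_integral_le_of_norm_le_const (μ := P) (.of_forall htaylor)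

lemma hasFDerivAt_randomizedSmoothing (hf : Differentiable ℝ f)
    (hf' : LipschitzWith K (fderiv ℝ f)) (hX : MemLp X 2 P) (x : E) :
    HasFDerivAt (randomizedSmoothing f X P) (randomizedSmoothing (fderiv ℝ f) X P x) x := by
  have hquad : (fun y => randomizedSmoothing f X P y - randomizedSmoothing f X P x
      - randomizedSmoothing (fderiv ℝ f) X P x (y - x)) =O[𝓝 x] fun y => ‖y - x‖ ^ 2 :=
    .of_bound K (.of_forall fun y => by
      simpa using norm_randomizedSmoothing_sub_sub_fderiv_le hf hf' hX x y)
  exact .of_isLittleO (hquad.trans_isLittleO (isLittleO_pow_sub_sub x one_lt_two))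

end RandomizedSmoothing

section Gradient

variable {𝕜 H : Type*} [RCLike 𝕜] [NormedAddCommGroup H] [InnerProductSpace 𝕜 H] [CompleteSpace H]

lemma norm_gradient_sub_gradient (f : H → 𝕜) (x y : H) :
    ‖gradient f x - gradient f y‖ = ‖fderiv 𝕜 f x - fderiv 𝕜 f y‖ := by
  rw [gradient, gradient, ← map_sub, LinearIsometryEquiv.norm_map]

end Gradient

instance isGaussian_stdGaussian (d : ℕ) : IsGaussian (_root_.stdGaussian d) := by
  rw [show _root_.stdGaussian d = ProbabilityTheory.stdGaussian _ from map_pi_eq_stdGaussian]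
  infer_instance

theorem gaussian_smoothing_is_L_smooth_general {Ω H : Type*} [MeasurableSpace Ω]
    [NormedAddCommGroup H] [InnerProductSpace ℝ H] [CompleteSpace H]
    {P : Measure Ω} [IsProbabilityMeasure P] {X : Ω → H} (hX : MemLp X 2 P)
    {f : H → ℝ} (hf : Differentiable ℝ f) {L : ℝ}
    (hlip : ∀ x y, ‖gradient f x - gradient f y‖ ≤ L * ‖x - y‖) :
    Differentiable ℝ (randomizedSmoothing f X P) ∧
      ∀ x y, ‖gradient (randomizedSmoothing f X P) x - gradient (randomizedSmoothing f X P) y‖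
        ≤ L * ‖x - y‖ := by
  simp only [norm_gradient_sub_gradient] at hlip ⊢
  have hf' : LipschitzWith L.toNNReal (fderiv ℝ f) :=
    .of_dist_le' (by simpa only [dist_eq_norm] using hlip)
  have hderiv := hasFDerivAt_randomizedSmoothing hf hf' hX
  refine ⟨fun x => (hderiv x).differentiableAt, fun x y => ?_⟩
  have hint (z : H) : Integrable (fun ω => fderiv ℝ f (z + X ω)) P :=
    integrable_comp_of_lipschitzWith hf' ((integrable_const z).add (hX.integrable one_le_two))
  rw [(hderiv x).fderiv, (hderiv y).fderiv]
  exact norm_randomizedSmoothing_sub_le (hint x) (hint y) fun u => by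
    simpa only [add_sub_add_right_eq_sub] using hlip (x + u) (y + u)

/-- If `f : ℝ^d → ℝ` is `L`-smooth and `f_μ` is its Gaussian smoothing with parameter `μ > 0`,
then `f_μ` is differentiable and `L`-smooth. -/
theorem gaussian_smoothing_is_L_smooth
    (d : ℕ) (L μ : ℝ) (hμ : 0 < μ)
    (f : EuclideanSpace ℝ (Fin d) → ℝ)
    (hdiff : Differentiable ℝ f)
    (hlip : ∀ x y, ‖gradient f x - gradient f y‖ ≤ L * ‖x - y‖)
    (fμ : EuclideanSpace ℝ (Fin d) → ℝ)
    (hfμ : ∀ x, fμ x = ∫ u, f (x + μ • u) ∂(stdGaussian d)) :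
    Differentiable ℝ fμ ∧ ∀ x y, ‖gradient fμ x - gradient fμ y‖ ≤ L * ‖x - y‖ := by
  obtain rfl : fμ = randomizedSmoothing f (fun u => μ • u) (_root_.stdGaussian d) := funext hfμ
  exact gaussian_smoothing_is_L_smooth_general (IsGaussian.memLp_two_id.const_smul μ) hdiff hlip
end

section
/- Let f : ℝ^d → ℝ be L-smooth, let μ > 0, and let f_μ be its Gaussian smoothing. Then for every x ∈ ℝ^d, the two-point Gaussian gradient estimator is an unbiased estimate of ∇f_μ(x): ∇f_μ(x) = E_u[ ((f(x + μ u) − f(x))/μ) · u ], where u ~ N(0, I_d). -/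
open MeasureTheory ProbabilityTheory

/-! By the Cameron–Martin formula, `∫ f (x + μ • (h + u)) dγ(u)` equals
`∫ exp (⟪h, u⟫ - ‖h‖ ^ 2 / 2) * f (x + μ • u) dγ(u)`, so all dependence on the base point sits in a
smooth weight and `f_μ` can be differentiated without differentiating `f`. The gradient of the
weight at `h = 0` is `u`, whence `∇ f_μ(x) = μ⁻¹ ∫ f (x + μ • u) • u dγ(u)`; subtracting `f x`
changes nothing because `γ` is centred. Near `h = 0` the derivative of the weight is dominated by
`exp (2 * ‖u‖)`, which lies in `L^q(γ)` for all `q < ∞` by Fernique's theorem, so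
`f (x + μ • ·) ∈ L^p(γ)` for some `p > 1` is enough regularity. For `f` with Lipschitz gradient it
holds because `f` grows at most quadratically. -/

open Complex InnerProductSpace Metric
open scoped ENNReal NNReal Real

section IsGaussian

variable {E F : Type*} [NormedAddCommGroup E] [NormedSpace ℝ E] [CompleteSpace E]
  [SecondCountableTopology E] [MeasurableSpace E] [BorelSpace E]
  [NormedAddCommGroup F] {γ : Measure E} [IsGaussian γ] {p : ℝ≥0∞}

lemma integrable_exp_mul_norm_of_isGaussian (c : ℝ) :
    Integrable (fun u => Real.exp (c * ‖u‖)) γ := by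
  obtain ⟨a, ha, hint⟩ := IsGaussian.exists_integrable_exp_sq γ
  refine (hint.const_mul (Real.exp (c ^ 2 / (4 * a)))).mono' (by fun_prop) (ae_of_all _ fun u => ?_)
  rw [Real.norm_of_nonneg (Real.exp_nonneg _), ← Real.exp_add, Real.exp_le_exp]
  have hsq : c ^ 2 / (4 * a) + a * ‖u‖ ^ 2 - c * ‖u‖ = (c - 2 * a * ‖u‖) ^ 2 / (4 * a) := by
    field_simp
    ring
  linarith [show 0 ≤ (c - 2 * a * ‖u‖) ^ 2 / (4 * a) by positivity]

lemma memLp_exp_mul_norm_of_isGaussian (c : ℝ) (hp : p ≠ ∞) :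
    MemLp (fun u => Real.exp (c * ‖u‖)) p γ := by
  have hmeas : AEStronglyMeasurable (fun u => Real.exp (c * ‖u‖)) γ := by fun_prop
  rcases eq_or_ne p 0 with rfl | hp0
  · exact memLp_zero_iff_aestronglyMeasurable.2 hmeas
  · rw [← integrable_norm_rpow_iff hmeas hp0 hp]
    convert! integrable_exp_mul_norm_of_isGaussian (γ := γ) (c * p.toReal) using 2 with u
    rw [Real.norm_of_nonneg (Real.exp_nonneg _), ← Real.exp_mul, mul_right_comm]

lemma integrable_exp_mul_norm_smul_of_memLp [NormedSpace ℝ F] {g : E → F} (hp : 1 < p)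
    (hg : MemLp g p γ) (c : ℝ) : Integrable (fun u => Real.exp (c * ‖u‖) • g u) γ := by
  have hconj : p.conjExponent.HolderConjugate p := (ENNReal.HolderConjugate.conjExponent hp.le).symm
  have hq : p.conjExponent ≠ ∞ := (ENNReal.HolderConjugate.ne_top_iff_ne_one _ p).2 hp.ne'
  exact memLp_one_iff_integrable.1 (hg.smul (memLp_exp_mul_norm_of_isGaussian c hq))

lemma integrable_smul_self_of_memLp {g : E → ℝ} (hp : 1 < p) (hg : MemLp g p γ) :
    Integrable (fun u => g u • u) γ := by
  refine (integrable_exp_mul_norm_smul_of_memLp hp hg 1).mono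
    (hg.1.smul aestronglyMeasurable_id) (ae_of_all _ fun u => ?_)
  rw [norm_smul, norm_smul, one_mul, mul_comm, Real.norm_of_nonneg (Real.exp_nonneg _)]
  gcongr
  linarith [Real.add_one_le_exp ‖u‖]

end IsGaussian

section LipschitzFDeriv

variable {E F : Type*} [NormedAddCommGroup E] [NormedSpace ℝ E] [NormedAddCommGroup F]
  [NormedSpace ℝ F] {f : E → F} {K : ℝ≥0}

lemma norm_sub_le_of_lipschitzWith_fderiv (hf : Differentiable ℝ f)
    (hK : LipschitzWith K (fderiv ℝ f)) (x h : E) :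
    ‖f (x + h) - f x‖ ≤ (‖fderiv ℝ f x‖ + K * ‖h‖) * ‖h‖ := by
  have hbound (y : E) (hy : y ∈ closedBall x ‖h‖) : ‖fderiv ℝ f y‖ ≤ ‖fderiv ℝ f x‖ + K * ‖h‖ :=
    calc ‖fderiv ℝ f y‖ ≤ ‖fderiv ℝ f x‖ + ‖fderiv ℝ f y - fderiv ℝ f x‖ :=
      norm_le_norm_add_norm_sub' _ _
      _ ≤ ‖fderiv ℝ f x‖ + K * ‖y - x‖ := by gcongr; exact hK.norm_sub_le y x
      _ ≤ ‖fderiv ℝ f x‖ + K * ‖h‖ := by gcongr; exact mem_closedBall_iff_norm.1 hy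
  simpa using (convex_closedBall x ‖h‖).norm_image_sub_le_of_norm_fderiv_le (fun y _ => hf y) hbound
    (mem_closedBall_self (norm_nonneg h)) (show x + h ∈ closedBall x ‖h‖ by simp)

lemma norm_le_mul_exp_of_lipschitzWith_fderiv (hf : Differentiable ℝ f)
    (hK : LipschitzWith K (fderiv ℝ f)) (x h : E) :
    ‖f (x + h)‖ ≤ (‖f x‖ + ‖fderiv ℝ f x‖ + 2 * K) * Real.exp ‖h‖ := by
  have hexp := Real.quadratic_le_exp_of_nonneg (norm_nonneg h)
  calc ‖f (x + h)‖ ≤ ‖f x‖ + ‖f (x + h) - f x‖ := norm_le_norm_add_norm_sub' _ _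
    _ ≤ ‖f x‖ + (‖fderiv ℝ f x‖ + K * ‖h‖) * ‖h‖ := by
      gcongr
      exact norm_sub_le_of_lipschitzWith_fderiv hf hK x h
    _ = ‖f x‖ * 1 + ‖fderiv ℝ f x‖ * ‖h‖ + 2 * K * (‖h‖ ^ 2 / 2) := by ring
    _ ≤ ‖f x‖ * Real.exp ‖h‖ + ‖fderiv ℝ f x‖ * Real.exp ‖h‖ + 2 * K * Real.exp ‖h‖ := by
      gcongr <;> nlinarith [norm_nonneg h]
    _ = _ := by ring

lemma memLp_comp_add_smul_of_lipschitzWith_fderiv [CompleteSpace E] [SecondCountableTopology E]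
    [MeasurableSpace E] [BorelSpace E] {γ : Measure E} [IsGaussian γ] {p : ℝ≥0∞} (hp : p ≠ ∞)
    (hf : Differentiable ℝ f) (hK : LipschitzWith K (fderiv ℝ f)) (x : E) (μ : ℝ) :
    MemLp (fun u => f (x + μ • u)) p γ := by
  have hcont : Continuous fun u => f (x + μ • u) := hf.continuous.comp (by fun_prop)
  refine (memLp_exp_mul_norm_of_isGaussian |μ| hp).of_le_mul
    (c := ‖f x‖ + ‖fderiv ℝ f x‖ + 2 * K) hcont.aestronglyMeasurable (ae_of_all _ fun u => ?_)
  simpa [norm_smul] using norm_le_mul_exp_of_lipschitzWith_fderiv hf hK x (μ • u)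

end LipschitzFDeriv

lemma lipschitzWith_fderiv_of_norm_gradient_sub_le {E : Type*} [NormedAddCommGroup E]
    [InnerProductSpace ℝ E] [CompleteSpace E] {f : E → ℝ} {L : ℝ}
    (hf : ∀ x y, ‖gradient f x - gradient f y‖ ≤ L * ‖x - y‖) :
    LipschitzWith L.toNNReal (fderiv ℝ f) := by
  rw [← toDual_comp_gradient, (toDual ℝ E).isometry.lipschitzWith_iff]
  exact .of_dist_le' fun x y => by simpa only [dist_eq_norm] using hf x y

section CameronMartinWeight

variable {E : Type*} [NormedAddCommGroup E] [InnerProductSpace ℝ E]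

/-- The Cameron–Martin density: the density at `u` of the standard Gaussian measure translated by
`h` with respect to the standard Gaussian measure itself. It carries the dependence of a Gaussian
average on its centre, so that the average can be differentiated under the integral. -/
noncomputable def cameronMartinWeight (h u : E) : ℝ :=
  Real.exp (inner ℝ h u - ‖h‖ ^ 2 / 2)

@[simp]
lemma cameronMartinWeight_zero_left (u : E) : cameronMartinWeight 0 u = 1 := by
  simp [cameronMartinWeight]

@[fun_prop]
lemma continuous_cameronMartinWeight (h : E) : Continuous (cameronMartinWeight h) := by
  unfold cameronMartinWeight
  fun_prop

lemma hasFDerivAt_cameronMartinWeight (h u : E) :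
    HasFDerivAt (fun h => cameronMartinWeight h u)
      (cameronMartinWeight h u • innerSL ℝ (u - h)) h := by
  have hinner : HasFDerivAt (fun h => inner ℝ h u) (innerSL ℝ u) h :=
    (innerSL ℝ u).hasFDerivAt.congr_of_eventuallyEq (.of_forall fun h => real_inner_comm u h)
  have hsq : HasFDerivAt (fun h : E => ‖h‖ ^ 2 / 2) (innerSL ℝ h) h := by
    convert! (hasStrictFDerivAt_norm_sq h).hasFDerivAt.mul_const (2⁻¹ : ℝ) using 1
    ext v
    simp
  exact ((hinner.sub hsq).congr_fderiv (map_sub (innerSL ℝ) u h).symm).exp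

lemma norm_cameronMartinWeight_smul_innerSL_le {h u : E} (hh : ‖h‖ ≤ 1) :
    ‖cameronMartinWeight h u • innerSL ℝ (u - h)‖ ≤ Real.exp (2 * ‖u‖) := by
  have hexponent : inner ℝ h u - ‖h‖ ^ 2 / 2 ≤ ‖u‖ := by
    nlinarith [real_inner_le_norm h u, norm_nonneg u, sq_nonneg ‖h‖]
  have hsub : ‖u - h‖ ≤ Real.exp ‖u‖ := by
    linarith [norm_sub_le u h, Real.add_one_le_exp ‖u‖]
  rw [norm_smul, innerSL_apply_norm, cameronMartinWeight, Real.norm_of_nonneg (Real.exp_nonneg _),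
    two_mul, Real.exp_add]
  gcongr

end CameronMartinWeight

section StdGaussian

variable {E F : Type*} [NormedAddCommGroup E] [InnerProductSpace ℝ E] [NormedAddCommGroup F]
  [NormedSpace ℝ F]

/-- The real-valued density of the standard Gaussian measure on `E` with respect to `volume`,
through which the Cameron–Martin formula follows from translation invariance. -/
noncomputable def stdGaussianPDFReal (x : E) : ℝ :=
  (2 * π) ^ (-(Module.finrank ℝ E / 2 : ℝ)) * Real.exp (-‖x‖ ^ 2 / 2)

lemma stdGaussianPDFReal_nonneg (x : E) : 0 ≤ stdGaussianPDFReal x := by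
  unfold stdGaussianPDFReal
  positivity

@[fun_prop]
lemma continuous_stdGaussianPDFReal : Continuous (stdGaussianPDFReal (E := E)) := by
  unfold stdGaussianPDFReal
  fun_prop

lemma stdGaussianPDFReal_sub (h u : E) :
    stdGaussianPDFReal (u - h) = stdGaussianPDFReal u * cameronMartinWeight h u := by
  rw [cameronMartinWeight, stdGaussianPDFReal, stdGaussianPDFReal, mul_assoc, ← Real.exp_add,
    norm_sub_sq_real, real_inner_comm]
  ring_nf

variable [FiniteDimensional ℝ E] [MeasurableSpace E] [BorelSpace E]

lemma integral_stdGaussianPDFReal_mul_cexp (t : E) :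
    ∫ x, (stdGaussianPDFReal x : ℂ) * cexp (inner ℝ t x * I) = cexp (-‖t‖ ^ 2 / 2) := by
  have hZ : (π / (1 / 2) : ℂ) ^ (Module.finrank ℝ E / 2 : ℂ) =
      (((2 * π) ^ (Module.finrank ℝ E / 2 : ℝ) : ℝ) : ℂ) := by
    rw [ofReal_cpow (by positivity)]
    push_cast
    ring_nf
  calc ∫ x, (stdGaussianPDFReal x : ℂ) * cexp (inner ℝ t x * I)
    _ = ∫ x : E, (((2 * π) ^ (-(Module.finrank ℝ E / 2 : ℝ)) : ℝ) : ℂ) *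
          cexp (-(1 / 2) * ‖x‖ ^ 2 + I * inner ℝ t x) := by
      congr with x
      rw [stdGaussianPDFReal, Complex.exp_add]
      push_cast
      ring_nf
    _ = cexp (-‖t‖ ^ 2 / 2) := by
      rw [integral_const_mul, GaussianFourier.integral_cexp_neg_mul_sq_norm_add (by norm_num), hZ,
        ← mul_assoc, ← ofReal_mul, ← Real.rpow_add (by positivity), I_sq]
      norm_num

lemma integrable_stdGaussianPDFReal : Integrable (stdGaussianPDFReal (E := E)) := by
  have h : ∫ x : E, (stdGaussianPDFReal x : ℂ) = 1 := by
    simpa using integral_stdGaussianPDFReal_mul_cexp (0 : E)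
  refine Integrable.of_integral_ne_zero ?_
  rw [integral_complex_ofReal] at h
  norm_cast at h
  simp [h]

lemma stdGaussian_eq_withDensity :
    ProbabilityTheory.stdGaussian E =
      volume.withDensity fun x => ENNReal.ofReal (stdGaussianPDFReal x) := by
  have := isFiniteMeasure_withDensity_ofReal (integrable_stdGaussianPDFReal (E := E)).2
  refine Measure.ext_of_charFun (funext fun t => ?_)
  rw [charFun_stdGaussian, charFun_apply,
    integral_withDensity_eq_integral_toReal_smul (by fun_prop) (by simp),
    ← integral_stdGaussianPDFReal_mul_cexp]
  simp only [ENNReal.toReal_ofReal (stdGaussianPDFReal_nonneg _), real_smul, real_inner_comm]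

lemma integral_stdGaussian_eq_integral_smul (g : E → F) :
    ∫ u, g u ∂ProbabilityTheory.stdGaussian E = ∫ u, stdGaussianPDFReal u • g u := by
  rw [stdGaussian_eq_withDensity,
    integral_withDensity_eq_integral_toReal_smul (by fun_prop) (by simp)]
  simp only [ENNReal.toReal_ofReal (stdGaussianPDFReal_nonneg _)]

lemma integral_add_left_stdGaussian (g : E → F) (h : E) :
    ∫ u, g (h + u) ∂ProbabilityTheory.stdGaussian E =
      ∫ u, cameronMartinWeight h u • g u ∂ProbabilityTheory.stdGaussian E := by
  simp only [integral_stdGaussian_eq_integral_smul, smul_smul, ← stdGaussianPDFReal_sub]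
  simpa using integral_add_left_eq_self (fun u => stdGaussianPDFReal (u - h) • g u) h

lemma hasFDerivAt_integral_add_left_stdGaussian {g : E → F} {p : ℝ≥0∞} (hp : 1 < p)
    (hg : MemLp g p (ProbabilityTheory.stdGaussian E)) :
    HasFDerivAt (fun h => ∫ u, g (h + u) ∂ProbabilityTheory.stdGaussian E)
      (∫ u, (innerSL ℝ u).smulRight (g u) ∂ProbabilityTheory.stdGaussian E) 0 := by
  have hbound (u h : E) (hh : h ∈ ball 0 1) :
      ‖(cameronMartinWeight h u • innerSL ℝ (u - h)).smulRight (g u)‖ ≤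
        ‖Real.exp (2 * ‖u‖) • g u‖ := by
    rw [ContinuousLinearMap.norm_smulRight_apply, norm_smul (Real.exp _),
      Real.norm_of_nonneg (Real.exp_nonneg _)]
    gcongr
    exact norm_cameronMartinWeight_smul_innerSL_le (mem_ball_zero_iff.1 hh).le
  have hmeas (h : E) : AEStronglyMeasurable (fun u => cameronMartinWeight h u • g u)
      (ProbabilityTheory.stdGaussian E) :=
    (continuous_cameronMartinWeight h).aestronglyMeasurable.smul hg.1
  have hmeas' : AEStronglyMeasurable
      (fun u => (cameronMartinWeight 0 u • innerSL ℝ (u - 0)).smulRight (g u))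
      (ProbabilityTheory.stdGaussian E) :=
    (ContinuousLinearMap.smulRightL ℝ E F).aestronglyMeasurable_comp₂ (by fun_prop) hg.1
  have hderiv := hasFDerivAt_integral_of_dominated_of_fderiv_le (ball_mem_nhds (0 : E) one_pos)
    (.of_forall hmeas) (by simpa using hg.integrable hp.le) hmeas' (ae_of_all _ hbound)
    (integrable_exp_mul_norm_smul_of_memLp hp hg 2).norm
    (ae_of_all _ fun u h _ => (hasFDerivAt_cameronMartinWeight h u).smul_const (g u))
  simpa [integral_add_left_stdGaussian] using hderiv

lemma hasGradientAt_integral_add_left_stdGaussian {g : E → ℝ} {p : ℝ≥0∞} (hp : 1 < p)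
    (hg : MemLp g p (ProbabilityTheory.stdGaussian E)) :
    HasGradientAt (fun h => ∫ u, g (h + u) ∂ProbabilityTheory.stdGaussian E)
      (∫ u, g u • u ∂ProbabilityTheory.stdGaussian E) 0 := by
  refine (hasFDerivAt_integral_add_left_stdGaussian hp hg).congr_fderiv ?_
  refine Eq.trans ?_ ((toDual ℝ E).toContinuousLinearEquiv.integral_comp_comm _)
  congr with u v
  simp [mul_comm]

lemma hasGradientAt_integral_add_smul_stdGaussian {f : E → ℝ} {p : ℝ≥0∞} (hp : 1 < p) {μ : ℝ}
    (hμ : μ ≠ 0) {x : E} (hf : MemLp (fun u => f (x + μ • u)) p (ProbabilityTheory.stdGaussian E)) :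
    HasGradientAt (fun y => ∫ u, f (y + μ • u) ∂ProbabilityTheory.stdGaussian E)
      (μ⁻¹ • ∫ u, f (x + μ • u) • u ∂ProbabilityTheory.stdGaussian E) x := by
  have hshift : HasFDerivAt (fun y => μ⁻¹ • (y - x)) (μ⁻¹ • ContinuousLinearMap.id ℝ E) x :=
    ((hasFDerivAt_id x).sub_const x).const_smul μ⁻¹
  have hgrad := hasGradientAt_integral_add_left_stdGaussian hp hf
  rw [show (0 : E) = μ⁻¹ • (x - x) by simp] at hgrad
  have hcomp := hgrad.hasFDerivAt.comp x hshift
  simp only [Function.comp_def, smul_add, smul_inv_smul₀ hμ, ← add_assoc, add_sub_cancel] at hcomp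
  refine hcomp.congr_fderiv ?_
  ext v
  simp

lemma integral_sub_div_smul_stdGaussian {g : E → ℝ} {p : ℝ≥0∞} (hp : 1 < p)
    (hg : MemLp g p (ProbabilityTheory.stdGaussian E)) (a μ : ℝ) :
    ∫ u, ((g u - a) / μ) • u ∂ProbabilityTheory.stdGaussian E =
      μ⁻¹ • ∫ u, g u • u ∂ProbabilityTheory.stdGaussian E := by
  have hid : Integrable (fun u : E => a • u) (ProbabilityTheory.stdGaussian E) :=
    IsGaussian.integrable_fun_id.smul a
  simp_rw [div_eq_inv_mul, mul_smul, sub_smul]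
  rw [integral_smul, integral_sub (integrable_smul_self_of_memLp hp hg) hid, integral_smul,
    integral_id_stdGaussian, smul_zero, sub_zero]

end StdGaussian

theorem gaussian_smoothing_unbiased_estimator_general {E : Type*} [NormedAddCommGroup E]
    [InnerProductSpace ℝ E] [FiniteDimensional ℝ E] [MeasurableSpace E] [BorelSpace E]
    {f : E → ℝ} {p : ℝ≥0∞} (hp : 1 < p) {μ : ℝ} (hμ : μ ≠ 0) {x : E}
    (hf : MemLp (fun u => f (x + μ • u)) p (ProbabilityTheory.stdGaussian E)) :
    HasGradientAt (fun y => ∫ u, f (y + μ • u) ∂ProbabilityTheory.stdGaussian E)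
      (∫ u, ((f (x + μ • u) - f x) / μ) • u ∂ProbabilityTheory.stdGaussian E) x := by
  rw [integral_sub_div_smul_stdGaussian hp hf]
  exact hasGradientAt_integral_add_smul_stdGaussian hp hμ hf

/-- The two-point Gaussian gradient estimator is an unbiased estimate of the gradient of the
Gaussian smoothing `f_μ`. -/
theorem gaussian_smoothing_unbiased_estimator
    (d : ℕ) (L μ : ℝ) (hμ : 0 < μ)
    (f : EuclideanSpace ℝ (Fin d) → ℝ)
    (hdiff : Differentiable ℝ f)
    (hlip : ∀ x y, ‖gradient f x - gradient f y‖ ≤ L * ‖x - y‖)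
    (fμ : EuclideanSpace ℝ (Fin d) → ℝ)
    (hfμ : ∀ x, fμ x = ∫ u, f (x + μ • u) ∂(stdGaussian d))
    (x : EuclideanSpace ℝ (Fin d)) :
    gradient fμ x = ∫ u, ((f (x + μ • u) - f x) / μ) • u ∂(stdGaussian d) := by
  obtain rfl := funext hfμ
  have hγ : _root_.stdGaussian d = ProbabilityTheory.stdGaussian (EuclideanSpace ℝ (Fin d)) :=
    map_pi_eq_stdGaussian
  rw [hγ]
  exact (gaussian_smoothing_unbiased_estimator_general ENNReal.one_lt_two hμ.ne'
    (memLp_comp_add_smul_of_lipschitzWith_fderiv ENNReal.ofNat_ne_top hdiff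
      (lipschitzWith_fderiv_of_norm_gradient_sub_le hlip) x μ)).gradient
end

section
/- Let f : ℝ^d → ℝ be L-smooth, let μ > 0, and let f_μ be its Gaussian smoothing. Then for all x, x̂ ∈ ℝ^d, ‖∇f_μ(x̂)‖² ≤ μ² L² (d + 3)³ + 4 L² ‖x̂ − x‖² + 2 ‖∇f(x)‖². -/
open MeasureTheory ProbabilityTheory

/-!
Split `∇f_μ(x̂) = (∇f_μ(x̂) - ∇f(x̂)) + (∇f(x̂) - ∇f(x)) + ∇f(x)`. Differentiating under the
integral sign gives `∇f_μ(x̂) = E[∇f(x̂ + μu)]`, so the first term has norm at most `L E‖μu‖`, and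
the second at most `L ‖x̂ - x‖`. Squaring with `(p + q + r)² ≤ 4p² + 4q² + 2r²` and using
`(E‖μu‖)² ≤ E‖μu‖² = μ² d`, the claim follows from `4d ≤ (d + 3)³`.
The Gaussian law of the perturbation `μu` enters only through its second moment.
-/

section Gradient

open InnerProductSpace

variable {𝕜 E : Type*} [RCLike 𝕜] [NormedAddCommGroup E] [InnerProductSpace 𝕜 E] [CompleteSpace E]

theorem norm_gradient (f : E → 𝕜) (x : E) : ‖gradient f x‖ = ‖fderiv 𝕜 f x‖ :=
  (toDual 𝕜 E).symm.norm_map _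

theorem lipschitzWith_gradient_iff {f : E → 𝕜} {K : NNReal} :
    LipschitzWith K (gradient f) ↔ LipschitzWith K (fderiv 𝕜 f) :=
  forall₂_congr fun _ _ => by rw [gradient, gradient, (toDual 𝕜 E).symm.edist_map]

end Gradient

section LipschitzDerivative

variable {E F : Type*} [NormedAddCommGroup E] [NormedAddCommGroup F] {K : NNReal}

theorem norm_apply_add_le_of_lipschitzWith {g : E → F} (hg : LipschitzWith K g) (x v : E) :
    ‖g (x + v)‖ ≤ ‖g x‖ + K * ‖v‖ := by
  simpa using norm_le_norm_add_norm_sub' (g (x + v)) (g x) |>.trans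
    (add_le_add_right (hg.norm_sub_le (x + v) x) _)

variable [NormedSpace ℝ E] [NormedSpace ℝ F]

theorem norm_apply_add_le_of_lipschitzWith_fderiv {f : E → F} (hf : Differentiable ℝ f)
    (hf' : LipschitzWith K (fderiv ℝ f)) (x v : E) :
    ‖f (x + v)‖ ≤ ‖f x‖ + (‖fderiv ℝ f x‖ + K * ‖v‖) * ‖v‖ := by
  have hbound : ∀ y ∈ Metric.closedBall x ‖v‖, ‖fderiv ℝ f y‖ ≤ ‖fderiv ℝ f x‖ + K * ‖v‖ := by
    intro y hy
    calc ‖fderiv ℝ f y‖ = ‖fderiv ℝ f (x + (y - x))‖ := by rw [add_sub_cancel]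
      _ ≤ ‖fderiv ℝ f x‖ + K * ‖y - x‖ := norm_apply_add_le_of_lipschitzWith hf' x (y - x)
      _ ≤ ‖fderiv ℝ f x‖ + K * ‖v‖ := by gcongr; exact mem_closedBall_iff_norm.1 hy
  have hmean : ‖f (x + v) - f x‖ ≤ (‖fderiv ℝ f x‖ + K * ‖v‖) * ‖v‖ := by
    simpa using (convex_closedBall x ‖v‖).norm_image_sub_le_of_norm_fderiv_le
      (fun y _ => hf y) hbound (x := x) (y := x + v) (by simp) (by simp)
  linarith [norm_le_norm_add_norm_sub' (f (x + v)) (f x)]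

end LipschitzDerivative

section RandomPerturbation

variable {Ω E : Type*} [MeasurableSpace Ω] [NormedAddCommGroup E] {P : Measure Ω} {U : Ω → E}

theorem sq_integral_norm_le_integral_norm_sq [IsProbabilityMeasure P] (hU : MemLp U 2 P) :
    (∫ ω, ‖U ω‖ ∂P) ^ 2 ≤ ∫ ω, ‖U ω‖ ^ 2 ∂P := by
  have hvar := variance_eq_sub hU.norm
  simp only [Pi.pow_apply] at hvar
  linarith [variance_nonneg (fun ω => ‖U ω‖) P]

theorem integrable_comp_add_of_lipschitzWith {F : Type*} [NormedAddCommGroup F] [IsFiniteMeasure P]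
    {g : E → F} {K : NNReal} (hg : LipschitzWith K g) (hU : Integrable U P) (x : E) :
    Integrable (fun ω => g (x + U ω)) P :=
  ((integrable_const ‖g x‖).add (hU.norm.const_mul K)).mono'
    (hg.continuous.comp_aestronglyMeasurable (hU.aestronglyMeasurable.const_add x))
    (.of_forall fun ω => norm_apply_add_le_of_lipschitzWith hg x (U ω))

end RandomPerturbation

section Smoothing

variable {Ω E F : Type*} [MeasurableSpace Ω] [NormedAddCommGroup E] [NormedAddCommGroup F]
  [NormedSpace ℝ F] {P : Measure Ω} {U : Ω → E} {f : E → F} {K : NNReal}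

/-- The smoothing `x ↦ E[f (x + U)]` of `f` by a random perturbation `U`. The Gaussian smoothing
`f_μ` is the case where `U = μ • u` with `u` standard Gaussian. -/
noncomputable def smoothing (P : Measure Ω) (U : Ω → E) (f : E → F) (x : E) : F :=
  ∫ ω, f (x + U ω) ∂P

variable [NormedSpace ℝ E] [IsFiniteMeasure P]

theorem integrable_comp_add_of_lipschitzWith_fderiv (hf : Differentiable ℝ f)
    (hf' : LipschitzWith K (fderiv ℝ f)) (hU : MemLp U 2 P) (x : E) :
    Integrable (fun ω => f (x + U ω)) P := by
  have hbound : Integrable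
      (fun ω => ‖f x‖ + (‖fderiv ℝ f x‖ * ‖U ω‖ + K * ‖U ω‖ ^ 2)) P :=
    (integrable_const _).add (((hU.integrable one_le_two).norm.const_mul _).add
      ((hU.integrable_norm_pow two_ne_zero).const_mul _))
  refine hbound.mono' (hf.continuous.comp_aestronglyMeasurable
    (hU.aestronglyMeasurable.const_add x)) (.of_forall fun ω => ?_)
  linarith [norm_apply_add_le_of_lipschitzWith_fderiv hf hf' x (U ω)]

theorem hasFDerivAt_smoothing (hf : Differentiable ℝ f) (hf' : LipschitzWith K (fderiv ℝ f))
    (hU : MemLp U 2 P) (x : E) :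
    HasFDerivAt (smoothing P U f) (∫ ω, fderiv ℝ f (x + U ω) ∂P) x := by
  have hU_int : Integrable U P := hU.integrable one_le_two
  have hbound : ∀ ω, ∀ y ∈ Metric.ball x 1,
      ‖fderiv ℝ f (y + U ω)‖ ≤ ‖fderiv ℝ f x‖ + K * (1 + ‖U ω‖) := by
    intro ω y hy
    have hyx : ‖y - x + U ω‖ ≤ 1 + ‖U ω‖ :=
      norm_add_le_of_le (mem_ball_iff_norm.1 hy).le le_rfl
    calc ‖fderiv ℝ f (y + U ω)‖ = ‖fderiv ℝ f (x + (y - x + U ω))‖ := by congr 2; abel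
      _ ≤ ‖fderiv ℝ f x‖ + K * ‖y - x + U ω‖ := norm_apply_add_le_of_lipschitzWith hf' x _
      _ ≤ ‖fderiv ℝ f x‖ + K * (1 + ‖U ω‖) := by gcongr
  exact hasFDerivAt_integral_of_dominated_of_fderiv_le (Metric.ball_mem_nhds x one_pos)
    (.of_forall fun y =>
      (integrable_comp_add_of_lipschitzWith_fderiv hf hf' hU y).aestronglyMeasurable)
    (integrable_comp_add_of_lipschitzWith_fderiv hf hf' hU x)
    (integrable_comp_add_of_lipschitzWith hf' hU_int x).aestronglyMeasurable
    (.of_forall hbound)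
    ((integrable_const _).add (((integrable_const _).add hU_int.norm).const_mul _))
    (.of_forall fun ω y _ => (hasFDerivAt_comp_add_right (U ω)).2 (hf _).hasFDerivAt)

end Smoothing

section SmoothingBounds

variable {Ω E F : Type*} [MeasurableSpace Ω] [NormedAddCommGroup E] [NormedSpace ℝ E]
  [NormedAddCommGroup F] [NormedSpace ℝ F] [CompleteSpace F] {P : Measure Ω}
  [IsProbabilityMeasure P] {U : Ω → E} {f : E → F} {K : NNReal}

theorem norm_fderiv_smoothing_sub_fderiv_le (hf : Differentiable ℝ f)
    (hf' : LipschitzWith K (fderiv ℝ f)) (hU : MemLp U 2 P) (x : E) :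
    ‖fderiv ℝ (smoothing P U f) x - fderiv ℝ f x‖ ≤ K * ∫ ω, ‖U ω‖ ∂P := by
  have hU_int : Integrable U P := hU.integrable one_le_two
  calc ‖fderiv ℝ (smoothing P U f) x - fderiv ℝ f x‖
      = ‖∫ ω, (fderiv ℝ f (x + U ω) - fderiv ℝ f x) ∂P‖ := by
        rw [(hasFDerivAt_smoothing hf hf' hU x).fderiv,
          integral_sub (integrable_comp_add_of_lipschitzWith hf' hU_int x) (integrable_const _),
          integral_const, probReal_univ, one_smul]
    _ ≤ ∫ ω, K * ‖U ω‖ ∂P :=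
        norm_integral_le_of_norm_le (hU_int.norm.const_mul _)
          (.of_forall fun ω => by simpa using hf'.norm_sub_le (x + U ω) x)
    _ = K * ∫ ω, ‖U ω‖ ∂P := integral_const_mul _ _

theorem norm_fderiv_smoothing_sq_le (hf : Differentiable ℝ f)
    (hf' : LipschitzWith K (fderiv ℝ f)) (hU : MemLp U 2 P) (x y : E) :
    ‖fderiv ℝ (smoothing P U f) y‖ ^ 2
      ≤ 4 * K ^ 2 * ∫ ω, ‖U ω‖ ^ 2 ∂P + 4 * K ^ 2 * ‖y - x‖ ^ 2 + 2 * ‖fderiv ℝ f x‖ ^ 2 := by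
  have hsplit : ‖fderiv ℝ (smoothing P U f) y‖
      ≤ K * ∫ ω, ‖U ω‖ ∂P + K * ‖y - x‖ + ‖fderiv ℝ f x‖ := by
    linarith [norm_fderiv_smoothing_sub_fderiv_le hf hf' hU y, hf'.norm_sub_le y x,
      norm_le_norm_add_norm_sub' (fderiv ℝ (smoothing P U f) y) (fderiv ℝ f y),
      norm_le_norm_add_norm_sub' (fderiv ℝ f y) (fderiv ℝ f x)]
  calc ‖fderiv ℝ (smoothing P U f) y‖ ^ 2
      ≤ (K * ∫ ω, ‖U ω‖ ∂P + K * ‖y - x‖ + ‖fderiv ℝ f x‖) ^ 2 := by gcongr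
    _ ≤ 2 * ((K * ∫ ω, ‖U ω‖ ∂P + K * ‖y - x‖) ^ 2 + ‖fderiv ℝ f x‖ ^ 2) := add_sq_le
    _ ≤ 2 * (2 * ((K * ∫ ω, ‖U ω‖ ∂P) ^ 2 + (K * ‖y - x‖) ^ 2) + ‖fderiv ℝ f x‖ ^ 2) := by
        gcongr
        exact add_sq_le
    _ = 4 * K ^ 2 * (∫ ω, ‖U ω‖ ∂P) ^ 2 + 4 * K ^ 2 * ‖y - x‖ ^ 2 + 2 * ‖fderiv ℝ f x‖ ^ 2 := by
        ring
    _ ≤ _ := by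
        gcongr
        exact sq_integral_norm_le_integral_norm_sq hU

end SmoothingBounds

section Gaussian

variable {E : Type*} [NormedAddCommGroup E] [InnerProductSpace ℝ E] [FiniteDimensional ℝ E]
  [MeasurableSpace E] [BorelSpace E]

theorem integral_sq_strongDual_stdGaussian (ℓ : StrongDual ℝ E) :
    ∫ u, ℓ u ^ 2 ∂ProbabilityTheory.stdGaussian E = ‖ℓ‖ ^ 2 := by
  rw [← variance_dual_stdGaussian,
    variance_of_integral_eq_zero (by fun_prop) (integral_strongDual_stdGaussian ℓ)]

variable (E) in
theorem integral_norm_sq_stdGaussian :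
    ∫ u, ‖u‖ ^ 2 ∂ProbabilityTheory.stdGaussian E = Module.finrank ℝ E := by
  let b := stdOrthonormalBasis ℝ E
  have hint (ℓ : StrongDual ℝ E) :
      Integrable (fun u => ℓ u ^ 2) (ProbabilityTheory.stdGaussian E) :=
    (IsGaussian.memLp_dual _ ℓ 2 (by simp)).integrable_sq
  calc ∫ u, ‖u‖ ^ 2 ∂ProbabilityTheory.stdGaussian E
      = ∫ u, ∑ i, innerSL ℝ (b i) u ^ 2 ∂ProbabilityTheory.stdGaussian E := by
        simp only [innerSL_apply_apply, b.sum_sq_inner_right]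
    _ = ∑ i, ∫ u, innerSL ℝ (b i) u ^ 2 ∂ProbabilityTheory.stdGaussian E :=
        integral_finsetSum _ fun i _ => hint (innerSL ℝ (b i))
    _ = Module.finrank ℝ E := by
        simp only [integral_sq_strongDual_stdGaussian, innerSL_apply_norm, b.norm_eq_one, one_pow,
          Finset.sum_const, Finset.card_univ, Fintype.card_fin, nsmul_one]

theorem gaussian_smoothing_delayed_gradient_norm_bound_general {L : ℝ} (μ : ℝ) {f : E → ℝ}
    (hdiff : Differentiable ℝ f)
    (hlip : ∀ x y, ‖gradient f x - gradient f y‖ ≤ L * ‖x - y‖) (x xhat : E) :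
    ‖gradient (smoothing (ProbabilityTheory.stdGaussian E) (fun u => μ • u) f) xhat‖ ^ 2
      ≤ μ ^ 2 * L ^ 2 * (4 * Module.finrank ℝ E) + 4 * L ^ 2 * ‖xhat - x‖ ^ 2
        + 2 * ‖gradient f x‖ ^ 2 := by
  have hlip' : LipschitzWith (Real.nnabs L) (fderiv ℝ f) :=
    lipschitzWith_gradient_iff.1 <| .of_dist_le_mul fun x y => by
      simpa only [dist_eq_norm, Real.coe_nnabs] using
        (hlip x y).trans (by gcongr; exact le_abs_self L)
  have hmemLp : MemLp (fun u : E => μ • u) 2 (ProbabilityTheory.stdGaussian E) :=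
    IsGaussian.memLp_two_id.const_smul μ
  have hmoment : ∫ u : E, ‖μ • u‖ ^ 2 ∂ProbabilityTheory.stdGaussian E
      = μ ^ 2 * Module.finrank ℝ E := by
    simp only [norm_smul, mul_pow, Real.norm_eq_abs, sq_abs, integral_const_mul,
      integral_norm_sq_stdGaussian]
  have hbound := norm_fderiv_smoothing_sq_le hdiff hlip' hmemLp x xhat
  rw [hmoment, Real.coe_nnabs, sq_abs, ← norm_gradient, ← norm_gradient] at hbound
  linarith

end Gaussian

theorem stdGaussian_eq_probabilityTheory_stdGaussian (d : ℕ) :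
    _root_.stdGaussian d = ProbabilityTheory.stdGaussian (EuclideanSpace ℝ (Fin d)) :=
  map_pi_eq_stdGaussian

/-- Delayed-iterate norm bound for Gaussian smoothing:
`‖∇f_μ(x̂)‖² ≤ μ² L² (d + 3)³ + 4 L² ‖x̂ − x‖² + 2 ‖∇f(x)‖²`. -/
theorem gaussian_smoothing_delayed_gradient_norm_bound
    (d : ℕ) (L μ : ℝ) (hμ : 0 < μ)
    (f : EuclideanSpace ℝ (Fin d) → ℝ)
    (hdiff : Differentiable ℝ f)
    (hlip : ∀ x y, ‖gradient f x - gradient f y‖ ≤ L * ‖x - y‖)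
    (fμ : EuclideanSpace ℝ (Fin d) → ℝ)
    (hfμ : ∀ x, fμ x = ∫ u, f (x + μ • u) ∂(stdGaussian d))
    (x xhat : EuclideanSpace ℝ (Fin d)) :
    ‖gradient fμ xhat‖ ^ 2
      ≤ μ ^ 2 * L ^ 2 * ((d : ℝ) + 3) ^ 3 + 4 * L ^ 2 * ‖xhat - x‖ ^ 2
        + 2 * ‖gradient f x‖ ^ 2 := by
  obtain rfl : fμ = smoothing (ProbabilityTheory.stdGaussian _) (fun u => μ • u) f :=
    funext fun y => by rw [hfμ, stdGaussian_eq_probabilityTheory_stdGaussian, smoothing]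
  refine (gaussian_smoothing_delayed_gradient_norm_bound_general μ hdiff hlip x xhat).trans ?_
  rw [finrank_euclideanSpace_fin]
  gcongr
  nlinarith [d.cast_nonneg (α := ℝ), pow_nonneg (d.cast_nonneg (α := ℝ)) 3]
end
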